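/- Let σ be a relational first-order language and let M be a countable σ-structure. Then M is HI-homogeneous if and only if M is HA-homogeneous; that is, every homomorphism between finite substructures of M extends to a self-embedding of M if and only if every homomorphism between finite substructures of M extends to an automorphism of M. -/

import Mathlib

open FirstOrder Language Structure

universe u v w

/-- `M` is HI-homogeneous: every homomorphism between finite substructures of `M`
extends to a self-embedding of `M`. -/
def IsHIHomogeneous (L : FirstOrder.Language.{u, v}) (M : Type w) [L.Structure M] : Prop :=
  ∀ (A B : L.Substructure M), (A : Set M).Finite → (B : Set M).Finite →
    ∀ f : A →[L] B, ∃ g : M ↪[L] M, ∀ a : A, g (a : M) = (f a : M)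

/-- `M` is HA-homogeneous: every homomorphism between finite substructures of `M`
extends to an automorphism of `M`. -/
def IsHAHomogeneous (L : FirstOrder.Language.{u, v}) (M : Type w) [L.Structure M] : Prop :=
  ∀ (A B : L.Substructure M), (A : Set M).Finite → (B : Set M).Finite →
    ∀ f : A →[L] B, ∃ g : M ≃[L] M, ∀ a : A, g (a : M) = (f a : M)

/-!
If finitely generated substructures are finite, HI-homogeneity extends every embedding of one of
them into `M` to all of `M`, hence in particular by one more point. Back-and-forth then makes a
countably generated `M` ultrahomogeneous. Now a homomorphism out of a finite substructure `A`
extends to a self-embedding `g`, so it was an embedding all along, namely the restriction of `g`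
to `A`, and ultrahomogeneity extends it to an automorphism.
-/

/-- `M` is locally finite: every finitely generated substructure of `M` is finite. This is the
property of structures in a relational language on which the back-and-forth argument rests. -/
def IsLocallyFinite (L : FirstOrder.Language.{u, v}) (M : Type w) [L.Structure M] : Prop :=
  ∀ S : L.Substructure M, S.FG → (S : Set M).Finite

section

variable {L : FirstOrder.Language.{u, v}} {M : Type w} [L.Structure M]

theorem isLocallyFinite_of_isRelational [L.IsRelational] : IsLocallyFinite L M :=
  fun _ hS => hS.finite

theorem IsHAHomogeneous.isHIHomogeneous (h : IsHAHomogeneous L M) : IsHIHomogeneous L M := by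
  intro A B hA hB f
  obtain ⟨g, hg⟩ := h A B hA hB f
  exact ⟨g.toEmbedding, hg⟩

theorem IsHIHomogeneous.exists_embedding_extending (h : IsHIHomogeneous L M)
    {S : L.Substructure M} (hS : (S : Set M).Finite) (f : S →[L] M) :
    ∃ g : M ↪[L] M, ∀ a : S, g a = f a := by
  have : Finite S := hS
  have hrange : (f.range : Set M).Finite := by
    rw [Hom.range_coe]
    exact Set.finite_range f
  exact h S f.range hS hrange (f.codRestrict f.range f.mem_range_self)

theorem IsHIHomogeneous.isExtensionPair (h : IsHIHomogeneous L M) (hfin : IsLocallyFinite L M) :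
    L.IsExtensionPair M M := by
  rw [isExtensionPair_iff_exists_embedding_closure_singleton_sup]
  intro S hS f m
  obtain ⟨g, hg⟩ := h.exists_embedding_extending (hfin S hS) f.toHom
  exact ⟨g.comp (Substructure.subtype _), Embedding.ext fun a => (hg a).symm⟩

theorem IsHIHomogeneous.isUltrahomogeneous (h : IsHIHomogeneous L M)
    (hfin : IsLocallyFinite L M) (hM : Structure.CG L M) : L.IsUltrahomogeneous M :=
  (isUltrahomogeneous_iff_IsExtensionPair hM).2 (h.isExtensionPair hfin)

theorem IsHIHomogeneous.isHAHomogeneous_of_isUltrahomogeneous (h : IsHIHomogeneous L M)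
    (hultra : L.IsUltrahomogeneous M) : IsHAHomogeneous L M := by
  intro A B hA hB f
  obtain ⟨g, hg⟩ := h A B hA hB f
  have : Finite A := hA
  obtain ⟨e, he⟩ := hultra A Substructure.FG.of_finite (g.comp A.subtype)
  refine ⟨e, fun a => ?_⟩
  calc
    e a = g a := (DFunLike.congr_fun he a).symm
    _ = f a := hg a

end

theorem hi_homogeneous_iff_ha_homogeneous_general {L : FirstOrder.Language.{u, v}} {M : Type w}
    [L.Structure M] (hfin : IsLocallyFinite L M) (hM : Structure.CG L M) :
    IsHIHomogeneous L M ↔ IsHAHomogeneous L M :=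
  ⟨fun h => h.isHAHomogeneous_of_isUltrahomogeneous (h.isUltrahomogeneous hfin hM),
    IsHAHomogeneous.isHIHomogeneous⟩

theorem hi_homogeneous_iff_ha_homogeneous (L : FirstOrder.Language.{u, v}) [L.IsRelational]
    (M : Type w) [L.Structure M] [Countable M] :
    IsHIHomogeneous L M ↔ IsHAHomogeneous L M :=
  hi_homogeneous_iff_ha_homogeneous_general isLocallyFinite_of_isRelational
    Structure.cg_of_countable
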